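/- arXiv:1609.01144 — 2 statements merged into one kernel-verified Lean document; each statement's English description precedes it below -/
import Mathlib

section
/- Assume Σ has at least 3 elements. A function f : Σ* → Σ* is congruence preserving if and only if there exist n ∈ ℕ and words w₀, …, wₙ ∈ Σ* such that f(x) = w₀ x w₁ x ⋯ w_{n-1} x wₙ for all x ∈ Σ*. -/
/-- A congruence on the free monoid `List S`: an equivalence relation compatible
with concatenation. -/
def IsCong {S : Type*} (r : List S → List S → Prop) : Prop :=
  Equivalence r ∧ ∀ x y u v : List S, r x y → r u v → r (x ++ u) (y ++ v)

/-- A monoid homomorphism from the free monoid `List S` to itself. -/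
def IsHom {S : Type*} (φ : List S → List S) : Prop :=
  φ [] = [] ∧ ∀ x y : List S, φ (x ++ y) = φ x ++ φ y

/-- `f` is congruence preserving. -/
def IsCP {S : Type*} (f : List S → List S) : Prop :=
  ∀ r : List S → List S → Prop, IsCong r → ∀ x y : List S, r x y → r (f x) (f y)

/-- `f` preserves all restricted congruences (kernels of endomorphisms of the free monoid). -/
def IsRCP {S : Type*} (f : List S → List S) : Prop :=
  ∀ φ : List S → List S, IsHom φ → ∀ x y : List S, φ x = φ y → φ (f x) = φ (f y)

/-- `f x = w₀ x w₁ x ⋯ x wₙ` for fixed words `w₀, …, wₙ`. -/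
def PolyForm {S : Type*} (f : List S → List S) : Prop :=
  ∃ (n : ℕ) (w : ℕ → List S), ∀ x : List S,
    f x = w 0 ++ List.flatten ((List.range n).map fun i => x ++ w (i + 1))

/-! A congruence preserving `f` is determined by its values at three letters `a, b, c`. If `f` and
`g` agree there, then, by induction on the length of `x`, for each `e ∈ {a, b, c}` the words `f x`
and `g x` have the same image under a substitution moving only `e`: erase `e` if it occurs in `x`,
so that `x` becomes shorter, and otherwise replace `e` by `x`, so that `[e]` becomes `x`. At a first
difference of `f x` and `g x` some `e ∈ {a, b, c}` is not among the (at most two) letters involved,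
and the substitution moving `e` would preserve the difference.

It remains to find a `g` of the required form with the same values as `f` at `a, b, c`. Identifying
two of these letters identifies the corresponding values of `f`, so `f [a]`, `f [b]`, `f [c]` have
the same length and in each position either carry the same letter, which contributes a constant to
`g`, or the letters `a`, `b`, `c`, which contribute an occurrence of the variable.

Every congruence used here is the kernel of an endomorphism of the free monoid, so `IsRCP f` is
enough. -/

section

variable {S : Type*} {f g φ : List S → List S}

theorem IsHom.map_cons (hφ : IsHom φ) (s : S) (x : List S) : φ (s :: x) = φ [s] ++ φ x :=
  hφ.2 [s] x

theorem IsHom.isCong_ker (hφ : IsHom φ) : IsCong fun x y => φ x = φ y :=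
  ⟨⟨fun _ => rfl, Eq.symm, Eq.trans⟩, fun x y u v hxy huv => by
    simp only [hφ.2, hxy, huv]⟩

theorem isHom_map (m : S → S) : IsHom (List.map m) :=
  ⟨rfl, fun _ _ => List.map_append⟩

theorem IsCP.isRCP (hf : IsCP f) : IsRCP f :=
  fun _ hφ => hf _ hφ.isCong_ker

theorem PolyForm.isCP (hf : PolyForm f) : IsCP f := by
  obtain ⟨n, w, hw⟩ := hf
  intro r ⟨hr, happend⟩ x y hxy
  rw [hw, hw]
  refine happend _ _ _ _ (hr.refl _) ?_
  induction List.range n with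
  | nil => exact hr.refl _
  | cons i l ih => exact happend _ _ _ _ (happend _ _ _ _ hxy (hr.refl _)) ih

theorem polyForm_nil : PolyForm fun _ : List S => [] :=
  ⟨0, fun _ => [], fun _ => rfl⟩

theorem PolyForm.cons (hf : PolyForm f) (s : S) : PolyForm fun x => s :: f x := by
  obtain ⟨n, w, hw⟩ := hf
  exact ⟨n, fun i => if i = 0 then s :: w 0 else w i, fun x => by simp [hw]⟩

theorem PolyForm.self_append (hf : PolyForm f) : PolyForm fun x => x ++ f x := by
  obtain ⟨n, w, hw⟩ := hf
  refine ⟨n + 1, fun i => if i = 0 then [] else w (i - 1), fun x => ?_⟩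
  simp [hw, List.range_succ_eq_map, Function.comp_def]

theorem eq_of_forall_exists_isHom_eq {x y : List S}
    (h : ∀ p q : S, ∃ φ, IsHom φ ∧ φ [p] = [p] ∧ φ [q] = [q] ∧ φ x = φ y) : x = y := by
  induction x generalizing y with
  | nil =>
    cases y with
    | nil => rfl
    | cons q y =>
      obtain ⟨φ, hφ, hq, -, hxy⟩ := h q q
      rw [hφ.1, hφ.map_cons, hq] at hxy
      exact absurd hxy (List.cons_ne_nil _ _).symm
  | cons p x ih =>
    cases y with
    | nil =>
      obtain ⟨φ, hφ, hp, -, hxy⟩ := h p p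
      rw [hφ.1, hφ.map_cons, hp] at hxy
      exact absurd hxy (List.cons_ne_nil _ _)
    | cons q y =>
      obtain rfl : p = q := by
        obtain ⟨φ, hφ, hp, hq, hxy⟩ := h p q
        rw [hφ.map_cons, hφ.map_cons q, hp, hq] at hxy
        exact List.head_eq_of_cons_eq hxy
      refine congrArg (p :: ·) (ih fun s t => ?_)
      obtain ⟨φ, hφ, hs, ht, hxy⟩ := h s t
      rw [hφ.map_cons, hφ.map_cons p y] at hxy
      exact ⟨φ, hφ, hs, ht, List.append_cancel_left hxy⟩

section

variable [DecidableEq S]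

/-- The endomorphism of the free monoid that sends the letter `e` to the word `w` and fixes every
other letter. -/
def substLetter (e : S) (w : List S) (x : List S) : List S :=
  x.flatMap (Function.update (fun s => [s]) e w)

theorem isHom_substLetter (e : S) (w : List S) : IsHom (substLetter e w) :=
  ⟨rfl, fun _ _ => List.flatMap_append⟩

theorem substLetter_singleton_self (e : S) (w : List S) : substLetter e w [e] = w := by
  simp [substLetter]

theorem substLetter_of_notMem {e : S} {x : List S} (he : e ∉ x) (w : List S) :
    substLetter e w x = x := by
  rw [substLetter, List.flatMap_congr (g := fun s => [s]), List.flatMap_singleton']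
  exact fun s hs => Function.update_of_ne (ne_of_mem_of_not_mem hs he) _ _

theorem substLetter_filter_ne (e : S) (x : List S) :
    substLetter e [] (x.filter (· ≠ e)) = substLetter e [] x := by
  induction x with
  | nil => rfl
  | cons s x ih =>
    by_cases hs : s = e <;> simp_all [substLetter]

theorem eq_or_eq_of_update_id_eq {a b c p q r : S} (hab : a ≠ b) (hac : a ≠ c) (hbc : b ≠ c)
    (hpq : Function.update id a b p = Function.update id a b q)
    (hqr : Function.update id b c q = Function.update id b c r)
    (hpr : Function.update id a c p = Function.update id a c r) :
    (p = q ∧ q = r) ∨ (p = a ∧ q = b ∧ r = c) := by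
  simp only [Function.update_apply, id] at hpq hqr hpr
  grind

theorem PolyForm.exists_of_map_update_id_eq {a b c : S} (hab : a ≠ b) (hac : a ≠ c) (hbc : b ≠ c)
    {x y z : List S} (hxy : x.map (Function.update id a b) = y.map (Function.update id a b))
    (hyz : y.map (Function.update id b c) = z.map (Function.update id b c))
    (hxz : x.map (Function.update id a c) = z.map (Function.update id a c)) :
    ∃ g, PolyForm g ∧ g [a] = x ∧ g [b] = y ∧ g [c] = z := by
  induction x generalizing y z with
  | nil =>
    obtain rfl : y = [] := List.map_eq_nil_iff.1 hxy.symm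
    obtain rfl : z = [] := List.map_eq_nil_iff.1 hxz.symm
    exact ⟨_, polyForm_nil, rfl, rfl, rfl⟩
  | cons p x ih =>
    obtain ⟨q, y, rfl, hq, hy⟩ := List.map_eq_cons_iff.1 hxy.symm
    obtain ⟨r, z, rfl, hr, hz⟩ := List.map_eq_cons_iff.1 hxz.symm
    obtain ⟨hqr, hyz⟩ := List.cons_eq_cons.1 hyz
    obtain ⟨g, hg, rfl, rfl, rfl⟩ := ih hy.symm hyz hz.symm
    obtain ⟨rfl, rfl⟩ | ⟨rfl, rfl, rfl⟩ :=
      eq_or_eq_of_update_id_eq hab hac hbc hq.symm hqr hr.symm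
    · exact ⟨_, hg.cons p, rfl, rfl, rfl⟩
    · exact ⟨_, hg.self_append, rfl, rfl, rfl⟩

end

theorem IsRCP.exists_polyForm_eq {a b c : S} (hf : IsRCP f) (hab : a ≠ b) (hac : a ≠ c)
    (hbc : b ≠ c) : ∃ g, PolyForm g ∧ g [a] = f [a] ∧ g [b] = f [b] ∧ g [c] = f [c] := by
  classical
  have identify {s t : S} (hst : s ≠ t) :
      (f [s]).map (Function.update id s t) = (f [t]).map (Function.update id s t) :=
    hf _ (isHom_map _) _ _ (by simp [hst.symm])
  exact PolyForm.exists_of_map_update_id_eq hab hac hbc (identify hab) (identify hbc) (identify hac)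

theorem IsRCP.eq_of_eqOn_letters (hf : IsRCP f) (hg : IsRCP g) {T : Set S}
    (hT : ∀ p q, ∃ e ∈ T, e ≠ p ∧ e ≠ q) (hfg : ∀ e ∈ T, f [e] = g [e]) : f = g := by
  classical
  funext x
  induction hn : x.length using Nat.strong_induction_on generalizing x with
  | _ n ih =>
  refine eq_of_forall_exists_isHom_eq fun p q => ?_
  obtain ⟨e, heT, hep, heq⟩ := hT p q
  obtain ⟨w, y, hy, hyx⟩ : ∃ w y, f y = g y ∧ substLetter e w y = substLetter e w x := by
    by_cases hx : e ∈ x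
    · refine ⟨[], x.filter (· ≠ e), ih _ ?_ _ rfl, substLetter_filter_ne e x⟩
      exact hn ▸ List.length_filter_lt_length_iff_exists.2 ⟨e, hx, by simp⟩
    · exact ⟨x, [e], hfg e heT, by
        rw [substLetter_singleton_self, substLetter_of_notMem hx]⟩
  have hw := isHom_substLetter e w
  refine ⟨substLetter e w, hw, substLetter_of_notMem (by simpa) w,
    substLetter_of_notMem (by simpa) w, ?_⟩
  rw [← hf _ hw _ _ hyx, hy, hg _ hw _ _ hyx]

theorem stmt_1_general {a b c : S} (hab : a ≠ b) (hac : a ≠ c) (hbc : b ≠ c) (f : List S → List S) :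
    [IsCP f, IsRCP f, PolyForm f].TFAE := by
  tfae_have 1 → 2 := IsCP.isRCP
  tfae_have 2 → 3 := fun hf => by
    obtain ⟨g, hg, ha, hb, hc⟩ := hf.exists_polyForm_eq hab hac hbc
    have hT (p q : S) : ∃ e ∈ ({a, b, c} : Set S), e ≠ p ∧ e ≠ q := by
      simp only [Set.exists_mem_insert, Set.mem_singleton_iff, exists_eq_left]
      grind
    rwa [hf.eq_of_eqOn_letters hg.isCP.isRCP hT (by simp [ha, hb, hc])]
  tfae_have 3 → 1 := PolyForm.isCP
  tfae_finish

end

/-- If `S` has at least 3 elements, `f : S* → S*` is congruence preserving iff it is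
of the form `x ↦ w₀ x w₁ x ⋯ x wₙ`. -/
theorem stmt_1 {S : Type*} (a b c : S) (hab : a ≠ b) (hac : a ≠ c) (hbc : b ≠ c)
    (f : List S → List S) : IsCP f ↔ PolyForm f :=
  (stmt_1_general hab hac hbc f).out 0 2
end

section
/- Let k ≥ 1 and f : (Σ*)ᵏ → Σ* be RCP, and let u₁, …, u_k, v₁, …, v_k ∈ Σ*, a, b ∈ Σ, and n₁, …, n_k ∈ ℕ. Then: (1) if |uᵢ| = |vᵢ| for all i ∈ {1, …, k}, then |f(u₁, …, u_k)| = |f(v₁, …, v_k)|; (2) if |uᵢ|_a = |vᵢ|_a for all i ∈ {1, …, k}, then |f(u₁, …, u_k)|_a = |f(v₁, …, v_k)|_a; (3) if b ≠ a then |f(a^{n₁}, …, a^{n_k})|_b = |f(ε, …, ε)|_b. -/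
/-- A `k`-ary function is congruence preserving. -/
def IsCPK {S : Type*} (k : ℕ) (f : (Fin k → List S) → List S) : Prop :=
  ∀ r : List S → List S → Prop, IsCong r → ∀ x y : Fin k → List S,
    (∀ i, r (x i) (y i)) → r (f x) (f y)

/-- A `k`-ary function preserves all restricted congruences
(kernels of endomorphisms of the free monoid). -/
def IsRCPK {S : Type*} (k : ℕ) (f : (Fin k → List S) → List S) : Prop :=
  ∀ φ : List S → List S, IsHom φ → ∀ x y : Fin k → List S,
    (∀ i, φ (x i) = φ (y i)) → φ (f x) = φ (f y)

/-- `f (x₁, …, x_k) = w₀ x_{i₁}^{p₁} w₁ x_{i₂}^{p₂} w₂ ⋯ x_{iₙ}^{pₙ} wₙ`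
for fixed words `w₀, …, wₙ`, indices `i₁, …, iₙ` and exponents `p₁, …, pₙ`. -/
def PolyFormK {S : Type*} (k : ℕ) (f : (Fin k → List S) → List S) : Prop :=
  ∃ (n : ℕ) (w : ℕ → List S) (idx : ℕ → Fin k) (p : ℕ → ℕ), ∀ x : Fin k → List S,
    f x = w 0 ++ List.flatten ((List.range n).map fun j =>
      List.flatten (List.replicate (p (j + 1)) (x (idx (j + 1)))) ++ w (j + 1))

/-!
An additive weight on words with values in `ℕ`, such as the length or the number of occurrences of
a letter, becomes an endomorphism of `List S` once the value `m` is encoded as the word `cᵐ` for a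
fixed letter `c`. Two words are identified by this endomorphism exactly when they have the same
weight.
-/

section

variable {S : Type*} {k : ℕ} {f : (Fin k → List S) → List S} {u v : Fin k → List S}

theorem isHom_replicate_of_map_append {weight : List S → ℕ}
    (h_append : ∀ x y, weight (x ++ y) = weight x + weight y) (c : S) :
    IsHom fun x => List.replicate (weight x) c := by
  have h_nil : weight [] = 0 := by simpa using h_append [] []
  exact ⟨by simp only [h_nil, List.replicate_zero],
    fun x y => by simp only [h_append, List.replicate_add]⟩

namespace IsRCPK

theorem weight_eq (hf : IsRCPK k f) {weight : List S → ℕ}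
    (h_append : ∀ x y, weight (x ++ y) = weight x + weight y)
    (h : ∀ i, weight (u i) = weight (v i)) : weight (f u) = weight (f v) := by
  rcases isEmpty_or_nonempty S with _ | ⟨⟨c⟩⟩
  · rw [Subsingleton.elim (f u) (f v)]
  · have h_replicate : List.replicate (weight (f u)) c = List.replicate (weight (f v)) c :=
      hf _ (isHom_replicate_of_map_append h_append c) u v fun i =>
        congrArg (List.replicate · c) (h i)
    exact List.replicate_left_injective c h_replicate

theorem length_eq (hf : IsRCPK k f) (h : ∀ i, (u i).length = (v i).length) :
    (f u).length = (f v).length :=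
  hf.weight_eq (fun _ _ => List.length_append) h

variable [DecidableEq S] {a : S}

theorem count_eq (hf : IsRCPK k f) (h : ∀ i, (u i).count a = (v i).count a) :
    (f u).count a = (f v).count a :=
  hf.weight_eq (fun _ _ => List.count_append) h

theorem count_eq_count_nil_of_notMem (hf : IsRCPK k f) (h : ∀ i, a ∉ u i) :
    (f u).count a = (f fun _ => []).count a :=
  hf.count_eq fun i => by rw [List.count_eq_zero_of_not_mem (h i), List.count_nil]

end IsRCPK

end

/-- Basic length and letter-count properties of `k`-ary RCP functions. -/
theorem stmt_13 {S : Type*} [DecidableEq S] (k : ℕ) (hk : 1 ≤ k)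
    (f : (Fin k → List S) → List S) (hf : IsRCPK k f)
    (u v : Fin k → List S) (a b : S) (n : Fin k → ℕ) :
    ((∀ i, (u i).length = (v i).length) → (f u).length = (f v).length) ∧
    ((∀ i, (u i).count a = (v i).count a) → (f u).count a = (f v).count a) ∧
    (b ≠ a →
      (f fun i => List.replicate (n i) a).count b = (f fun _ => []).count b) := by
  exact ⟨hf.length_eq, hf.count_eq, fun hba =>
    hf.count_eq_count_nil_of_notMem fun _ hb => hba (List.eq_of_mem_replicate hb)⟩
end
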